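/- arXiv:2008.09733 — 2 statements merged into one kernel-verified Lean document; each statement's English description precedes it below -/
import Mathlib

section
/- Let A, B, a, b ∈ [0,1] with A ≥ B and a ≥ b, and let w and l be lists with entries in [0,1]. Then R_{g,q}(w ++ (A·a, B·b) ++ l) ≥ R_{g,q}(w ++ (A·b, B·a) ++ l). (This is the same-category exchange step in the proof of Theorem 1: A and B play the roles of the discount values f(h) ≥ f(h+1) at two consecutive within-category positions, and a ≥ b are the relevances of two adjacent items of the same category, so placing the more relevant item first never decreases the expected reward.) -/
/-- Expected reward `R_{g,q}` of a list of attractiveness values. -/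
def reward (g q : ℝ) : List ℝ → ℝ
  | [] => 0
  | z :: rest => z + ((g - q) * z + q) * reward g q rest

/-!
The prefix `w` contributes the same reward and the same nonnegative continuation weight on both
sides, so only the two exchanged items followed by `l` matter. There the exchange changes the
reward by `(a - b) * ((A - q * B) + (g - q) * q * (A - B) * R(l))`: the product of the two
attractiveness values is `A * B * a * b` in either order, so the terms containing it cancel.
-/

/-- The factor `∏ ((g - q) * z + q)` by which a list of attractiveness values discounts the reward
of everything placed after it; in the browsing model, the probability of reading past the whole
list. -/
def continuationWeight (g q : ℝ) (w : List ℝ) : ℝ :=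
  (w.map fun z => (g - q) * z + q).prod

section

variable {g q : ℝ}

theorem reward_append (w l : List ℝ) :
    reward g q (w ++ l) = reward g q w + continuationWeight g q w * reward g q l := by
  induction w with
  | nil => simp [reward, continuationWeight]
  | cons z w ih =>
    simp only [List.cons_append, reward, ih]
    simp only [continuationWeight, List.map_cons, List.prod_cons]
    ring

theorem continuation_factor_nonneg (hq : 0 ≤ q) (hqg : q ≤ g) {z : ℝ} (hz : 0 ≤ z) :
    0 ≤ (g - q) * z + q :=
  add_nonneg (mul_nonneg (sub_nonneg.2 hqg) hz) hq

theorem continuationWeight_nonneg (hq : 0 ≤ q) (hqg : q ≤ g) {w : List ℝ}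
    (hw : ∀ x ∈ w, 0 ≤ x) : 0 ≤ continuationWeight g q w :=
  List.prod_nonneg <| List.forall_mem_map.2 fun x hx =>
    continuation_factor_nonneg hq hqg (hw x hx)

theorem reward_nonneg (hq : 0 ≤ q) (hqg : q ≤ g) {l : List ℝ} (hl : ∀ x ∈ l, 0 ≤ x) :
    0 ≤ reward g q l := by
  induction l with
  | nil => exact le_rfl
  | cons z l ih =>
    obtain ⟨hz, hl⟩ := List.forall_mem_cons.1 hl
    exact add_nonneg hz (mul_nonneg (continuation_factor_nonneg hq hqg hz) (ih hl))

theorem reward_append_le_reward_append_left (hq : 0 ≤ q) (hqg : q ≤ g) {w l l' : List ℝ}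
    (hw : ∀ x ∈ w, 0 ≤ x) (h : reward g q l ≤ reward g q l') :
    reward g q (w ++ l) ≤ reward g q (w ++ l') := by
  have hweight := continuationWeight_nonneg hq hqg hw
  rw [reward_append, reward_append]
  gcongr

theorem reward_cons_cons_sub_reward_exchange (A B a b : ℝ) (l : List ℝ) :
    reward g q (A * a :: B * b :: l) - reward g q (A * b :: B * a :: l) =
      (a - b) * ((A - q * B) + (g - q) * q * (A - B) * reward g q l) := by
  simp only [reward]
  ring

theorem reward_exchange_le (hq : 0 ≤ q) (hqg : q ≤ g) {A B a b : ℝ} (hAB : B ≤ A)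
    (hqAB : q * B ≤ A) (hab : b ≤ a) {l : List ℝ} (hl : ∀ x ∈ l, 0 ≤ x) :
    reward g q (A * b :: B * a :: l) ≤ reward g q (A * a :: B * b :: l) := by
  have hreward := reward_nonneg hq hqg hl
  rw [← sub_nonneg] at hqg hAB hqAB hab ⊢
  rw [reward_cons_cons_sub_reward_exchange]
  positivity

theorem same_category_exchange_general (hq : 0 ≤ q) (hqg : q ≤ g) {A B a b : ℝ} (hAB : B ≤ A)
    (hqAB : q * B ≤ A) (hab : b ≤ a) {w l : List ℝ} (hw : ∀ x ∈ w, 0 ≤ x)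
    (hl : ∀ x ∈ l, 0 ≤ x) :
    reward g q (w ++ A * b :: B * a :: l) ≤ reward g q (w ++ A * a :: B * b :: l) :=
  reward_append_le_reward_append_left hq hqg hw (reward_exchange_le hq hqg hAB hqAB hab hl)

end

/-- Same-category exchange step: with discount values `A ≥ B` and relevances `a ≥ b`,
placing the more relevant item first never decreases the expected reward. -/
theorem same_category_exchange (g q : ℝ) (hq0 : 0 ≤ q) (hqg : q ≤ g) (hg1 : g ≤ 1)
    (A B a b : ℝ) (hA : A ∈ Set.Icc (0 : ℝ) 1) (hB : B ∈ Set.Icc (0 : ℝ) 1)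
    (ha : a ∈ Set.Icc (0 : ℝ) 1) (hb : b ∈ Set.Icc (0 : ℝ) 1)
    (hAB : B ≤ A) (hab : b ≤ a)
    (w l : List ℝ) (hw : ∀ x ∈ w, x ∈ Set.Icc (0 : ℝ) 1)
    (hl : ∀ x ∈ l, x ∈ Set.Icc (0 : ℝ) 1) :
    reward g q (w ++ A * b :: B * a :: l) ≤ reward g q (w ++ A * a :: B * b :: l) := by
  have hqAB : q * B ≤ A := (mul_le_of_le_one_left hB.1 (hqg.trans hg1)).trans hAB
  exact same_category_exchange_general hq0 hqg hAB hqAB hab (fun x hx => (hw x hx).1)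
    fun x hx => (hl x hx).1
end

section
/- (Key Lipschitz bound in the proof of Theorem 2) Let z and z' be lists of length N with 0 ≤ z_k ≤ z'_k ≤ 1 for every index k, and suppose g < 1. Then R_{g,q}(z') − R_{g,q}(z) ≤ ((1 − g^N)/(1 − g)) · ∑_{k=1}^N κ_k · (z'_k − z_k), where κ_k = ∏_{j=1}^{k−1} ((g−q)·z_j + q) is the examination probability of position k under the smaller list z. -/
/-!
Changing one entry `z_k` into `z'_k` alters the reward through `z_k` itself and through the
probability of reading on, so the two rewards differ by exactly
`∑ κ_k (z'_k - z_k) (1 + (g - q) R(z'_{k+1}, …, z'_N))`. Here `κ_k (z'_k - z_k) ≥ 0`, and the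
last factor is at most `1 + g + ⋯ + g ^ (N - 1)`: for `q ≤ g` because rewards are themselves
bounded by geometric sums, for `g ≤ q` because it is at most `1`.
-/

section Reward

open Finset

/-- The probability of examining the next position after one of attractiveness `x`: it
interpolates linearly between `q` (at `x = 0`) and `g` (at `x = 1`). -/
def continuation (g q x : ℝ) : ℝ := (g - q) * x + q

/-- The probability `κ` that a position is examined. Positions are counted from `0`, so that
`examination g q z k` is the paper's `κ_{k+1}`. -/
def examination (g q : ℝ) (z : List ℝ) (k : ℕ) : ℝ :=
  ((z.take k).map (continuation g q)).prod

variable {g q x : ℝ} {z z' : List ℝ}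

lemma reward_cons (g q a : ℝ) (z : List ℝ) :
    reward g q (a :: z) = a + continuation g q a * reward g q z := rfl

lemma examination_zero (g q : ℝ) (z : List ℝ) : examination g q z 0 = 1 := by
  simp [examination]

lemma examination_cons_succ (g q a : ℝ) (z : List ℝ) (k : ℕ) :
    examination g q (a :: z) (k + 1) = continuation g q a * examination g q z k := by
  simp [examination]

theorem reward_sub_reward (g q : ℝ) (hlen : z.length = z'.length) :
    reward g q z' - reward g q z = ∑ k ∈ range z.length,
      examination g q z k * (z'.getD k 0 - z.getD k 0) *
        (1 + (g - q) * reward g q (z'.drop (k + 1))) := by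
  induction z generalizing z' with
  | nil => simp [List.length_eq_zero_iff.mp hlen.symm]
  | cons a z ih =>
    obtain _ | ⟨b, z'⟩ := z'
    · simp at hlen
    have split_first : reward g q (b :: z') - reward g q (a :: z) =
        continuation g q a * (reward g q z' - reward g q z) +
          (b - a) * (1 + (g - q) * reward g q z') := by
      simp only [reward_cons, continuation]
      ring
    rw [split_first, ih (Nat.succ.inj hlen), List.length_cons, sum_range_succ', mul_sum]
    simp [examination_zero, examination_cons_succ, mul_assoc]

lemma continuation_nonneg (hg : 0 ≤ g) (hq : 0 ≤ q) (hx : x ∈ Set.Icc 0 1) :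
    0 ≤ continuation g q x :=
  calc
    0 ≤ g * x + q * (1 - x) :=
      add_nonneg (mul_nonneg hg hx.1) (mul_nonneg hq (sub_nonneg.mpr hx.2))
    _ = continuation g q x := by rw [continuation]; ring

lemma continuation_le (hqg : q ≤ g) (hx : x ≤ 1) : continuation g q x ≤ g := by
  have := mul_le_of_le_one_right (sub_nonneg.mpr hqg) hx
  rw [continuation]
  linarith

lemma examination_nonneg (hg : 0 ≤ g) (hq : 0 ≤ q) (hz : ∀ x ∈ z, x ∈ Set.Icc 0 1) (k : ℕ) :
    0 ≤ examination g q z k := by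
  refine List.prod_nonneg fun p hp => ?_
  obtain ⟨x, hx, rfl⟩ := List.mem_map.mp hp
  exact continuation_nonneg hg hq (hz x (List.mem_of_mem_take hx))

lemma reward_nonneg_s11 (hg : 0 ≤ g) (hq : 0 ≤ q) (hz : ∀ x ∈ z, x ∈ Set.Icc 0 1) :
    0 ≤ reward g q z := by
  induction z with
  | nil => exact le_rfl
  | cons a z ih =>
    obtain ⟨ha, hz⟩ := List.forall_mem_cons.mp hz
    exact add_nonneg ha.1 (mul_nonneg (continuation_nonneg hg hq ha) (ih hz))

lemma reward_le_geom_sum (hq : 0 ≤ q) (hqg : q ≤ g) (hz : ∀ x ∈ z, x ∈ Set.Icc 0 1) :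
    reward g q z ≤ ∑ i ∈ range z.length, g ^ i := by
  induction z with
  | nil => exact le_rfl
  | cons a z ih =>
    obtain ⟨ha, hz⟩ := List.forall_mem_cons.mp hz
    have hg : 0 ≤ g := hq.trans hqg
    calc
      reward g q (a :: z) = a + continuation g q a * reward g q z := reward_cons g q a z
      _ ≤ 1 + g * ∑ i ∈ range z.length, g ^ i :=
        add_le_add ha.2
          (mul_le_mul (continuation_le hqg ha.2) (ih hz) (reward_nonneg_s11 hg hq hz) hg)
      _ = ∑ i ∈ range (a :: z).length, g ^ i := by
        rw [List.length_cons, geom_sum_succ, add_comm]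

lemma one_add_sub_mul_reward_le_geom_sum (hg : 0 ≤ g) (hq : 0 ≤ q)
    (hz : ∀ x ∈ z, x ∈ Set.Icc 0 1) :
    1 + (g - q) * reward g q z ≤ ∑ i ∈ range (z.length + 1), g ^ i := by
  have hR : 0 ≤ reward g q z := reward_nonneg_s11 hg hq hz
  have hG : 0 ≤ ∑ i ∈ range z.length, g ^ i := sum_nonneg fun i _ => pow_nonneg hg i
  have hslope : (g - q) * reward g q z ≤ g * ∑ i ∈ range z.length, g ^ i := by
    obtain hgq | hqg := le_total g q
    · exact (mul_nonpos_of_nonpos_of_nonneg (sub_nonpos.mpr hgq) hR).trans (mul_nonneg hg hG)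
    · exact mul_le_mul (sub_le_self g hq) (reward_le_geom_sum hq hqg hz) hR hg
  rw [geom_sum_succ, add_comm]
  gcongr

theorem reward_lipschitz_general (hg : 0 ≤ g) (hq : 0 ≤ q)
    (hzz' : List.Forall₂ (fun a b => 0 ≤ a ∧ a ≤ b ∧ b ≤ 1) z z') :
    reward g q z' - reward g q z ≤
      (∑ i ∈ range z.length, g ^ i) *
        ∑ k ∈ range z.length, examination g q z k * (z'.getD k 0 - z.getD k 0) := by
  have hlen : z.length = z'.length := hzz'.length_eq
  have hentry (k : ℕ) (hk : k < z.length) : 0 ≤ z[k] ∧ z[k] ≤ z'[k] ∧ z'[k] ≤ 1 :=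
    hzz'.get hk (hlen ▸ hk)
  have hz : ∀ x ∈ z, x ∈ Set.Icc 0 1 := List.forall_mem_iff_forall_getElem.mpr fun k hk =>
    ⟨(hentry k hk).1, (hentry k hk).2.1.trans (hentry k hk).2.2⟩
  have hz' : ∀ x ∈ z', x ∈ Set.Icc 0 1 := List.forall_mem_iff_forall_getElem.mpr fun k hk =>
    have h := hentry k (hlen ▸ hk)
    ⟨h.1.trans h.2.1, h.2.2⟩
  rw [reward_sub_reward g q hlen, mul_comm, sum_mul]
  refine sum_le_sum fun k hkN => ?_
  have hk : k < z.length := mem_range.mp hkN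
  refine mul_le_mul_of_nonneg_left ?_ ?_
  · calc
      1 + (g - q) * reward g q (z'.drop (k + 1))
        ≤ ∑ i ∈ range ((z'.drop (k + 1)).length + 1), g ^ i :=
        one_add_sub_mul_reward_le_geom_sum hg hq fun x hx => hz' x (List.mem_of_mem_drop hx)
      _ ≤ ∑ i ∈ range z.length, g ^ i :=
        sum_le_sum_of_subset_of_nonneg
          (range_mono (by rw [List.length_drop]; lia)) fun i _ _ => pow_nonneg hg i
  · rw [List.getD_eq_getElem _ _ hk, List.getD_eq_getElem _ _ (hlen ▸ hk)]
    exact mul_nonneg (examination_nonneg hg hq hz k) (sub_nonneg.mpr (hentry k hk).2.1)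

end Reward

/-- Key Lipschitz bound in the proof of Theorem 2: if `0 ≤ z_k ≤ z'_k ≤ 1` entrywise and
`g < 1`, then `R_{g,q}(z') - R_{g,q}(z)` is at most `(1-g^N)/(1-g)` times the
`κ`-weighted sum of the entrywise gaps, where `κ_k = ∏_{j<k} ((g-q)·z_j + q)` is the
examination probability of position `k` under the smaller list `z`. -/
theorem reward_lipschitz (g q : ℝ) (hq0 : 0 ≤ q) (hqg : q ≤ g) (hg1 : g < 1)
    (N : ℕ) (z z' : List ℝ) (hlen : z.length = N)
    (hzz' : List.Forall₂ (fun a b => 0 ≤ a ∧ a ≤ b ∧ b ≤ 1) z z') :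
    reward g q z' - reward g q z ≤
      (1 - g ^ N) / (1 - g) *
        ∑ k ∈ Finset.range N,
          ((z.take k).map (fun x => (g - q) * x + q)).prod * (z'.getD k 0 - z.getD k 0) := by
  subst hlen
  rw [← neg_div_neg_eq, neg_sub, neg_sub, ← geom_sum_eq hg1.ne]
  exact reward_lipschitz_general (hq0.trans hqg) hq0 hzz'
end
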